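/- arXiv:1909.03230 — 2 statements merged into one kernel-verified Lean document; each statement's English description precedes it below -/
import Mathlib

section
/- Let m ≥ 1 be an integer, α > m/2 a real number, and a ≥ 0. Then ∫_{ℝ^m} (1 + a² + |y|²)^{−α} dy = π^{m/2} · (Γ(α − m/2)/Γ(α)) · (1 + a²)^{−(α − m/2)}. -/
/-!
The proof is Schwinger's parametrization. With `c = 1 + a²`, Euler's integral gives
`Γ(α) (c + |y|²)^(-α) = ∫_{t > 0} t^(α-1) exp(-(c + |y|²) t) dt`. Integrating over `y` and
exchanging the integrals, the inner one becomes the Gaussian integral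
`∫ exp(-t |y|²) dy = (π/t)^(m/2)`, and what remains is again an Euler integral,
`π^(m/2) ∫_{t > 0} t^(α-m/2-1) exp(-c t) dt = π^(m/2) Γ(α - m/2) c^(-(α-m/2))`,
which converges because `α > m/2`. Its convergence also justifies the exchange, since the
integrand is nonnegative (`integrable_schwinger`).
-/

open MeasureTheory Real

/-- The integrand of the Schwinger parametrization of `(c + |y|²)^(-α)`. -/
noncomputable def schwinger (m : ℕ) (α c : ℝ) (y : EuclideanSpace ℝ (Fin m)) (t : ℝ) : ℝ :=
  t ^ (α - 1) * exp (-((c + ‖y‖ ^ 2) * t))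

lemma integrable_exp_neg_mul_norm_sq (m : ℕ) {t : ℝ} (ht : 0 < t) :
    Integrable (fun y : EuclideanSpace ℝ (Fin m) => exp (-t * ‖y‖ ^ 2)) := by
  -- A function that is not integrable has integral zero, while the Gaussian integral is positive.
  refine not_imp_comm.1 integral_undef ?_
  rw [GaussianFourier.integral_rexp_neg_mul_sq_norm ht]
  positivity

lemma schwinger_eq (m : ℕ) (α c : ℝ) (y : EuclideanSpace ℝ (Fin m)) (t : ℝ) :
    schwinger m α c y t = t ^ (α - 1) * exp (-(c * t)) * exp (-t * ‖y‖ ^ 2) := by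
  rw [schwinger, mul_assoc, ← exp_add]
  ring_nf

lemma integral_schwinger_space (m : ℕ) (α c : ℝ) {t : ℝ} (ht : 0 < t) :
    ∫ y, schwinger m α c y t =
      π ^ ((m : ℝ) / 2) * (t ^ (α - (m : ℝ) / 2 - 1) * exp (-(c * t))) := by
  simp_rw [schwinger_eq]
  rw [integral_const_mul, GaussianFourier.integral_rexp_neg_mul_sq_norm ht,
    finrank_euclideanSpace_fin, div_rpow pi_pos.le ht.le,
    show α - (m : ℝ) / 2 - 1 = (α - 1) - (m : ℝ) / 2 by ring, rpow_sub ht (α - 1)]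
  ring

lemma integrableOn_rpow_mul_exp {s c : ℝ} (hs : 0 < s) (hc : 0 < c) :
    IntegrableOn (fun t : ℝ => t ^ (s - 1) * exp (-(c * t))) (Set.Ioi 0) := by
  have h : ∫ t in Set.Ioi (0 : ℝ), t ^ (s - 1) * exp (-(c * t)) ≠ 0 := by
    rw [integral_rpow_mul_exp_neg_mul_Ioi hs hc]
    have := Gamma_pos_of_pos hs
    positivity
  exact not_imp_comm.1 integral_undef h

lemma integrable_schwinger (m : ℕ) {α c : ℝ} (hα : (m : ℝ) / 2 < α) (hc : 0 < c) :
    Integrable (Function.uncurry (schwinger m α c))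
      (volume.prod (volume.restrict (Set.Ioi (0 : ℝ)))) := by
  have hmeas : Measurable (Function.uncurry (schwinger m α c)) := by
    unfold schwinger Function.uncurry
    fun_prop
  rw [integrable_prod_iff' hmeas.aestronglyMeasurable]
  constructor
  · filter_upwards [ae_restrict_mem measurableSet_Ioi] with t ht
    simp only [Function.uncurry_apply_pair, schwinger_eq]
    exact (integrable_exp_neg_mul_norm_sq m ht).const_mul _
  · refine ((integrableOn_rpow_mul_exp (sub_pos.2 hα) hc).const_mul
      (π ^ ((m : ℝ) / 2))).congr ?_
    filter_upwards [ae_restrict_mem measurableSet_Ioi] with t ht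
    rw [← integral_schwinger_space m α c ht]
    refine integral_congr_ae (.of_forall fun y => ?_)
    have ht' : (0 : ℝ) < t := ht
    have : 0 ≤ schwinger m α c y t := by unfold schwinger; positivity
    simp [abs_of_nonneg this]

/-- For an integer `m ≥ 1`, a real `α > m/2` and `a ≥ 0`,
`∫_{ℝ^m} (1 + a² + |y|²)^(−α) dy = π^{m/2} · (Γ(α − m/2)/Γ(α)) · (1 + a²)^(−(α − m/2))`. -/
theorem multi_dim_gamma_integral (m : ℕ) (hm : 1 ≤ m) (α : ℝ) (hα : α > (m : ℝ) / 2)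
    (a : ℝ) (ha : 0 ≤ a) :
    ∫ y : EuclideanSpace ℝ (Fin m), (1 + a ^ 2 + ‖y‖ ^ 2) ^ (-α) =
      Real.pi ^ ((m : ℝ) / 2) * (Real.Gamma (α - (m : ℝ) / 2) / Real.Gamma α) *
        (1 + a ^ 2) ^ (-(α - (m : ℝ) / 2)) := by
  have hα0 : 0 < α := lt_of_le_of_lt (by positivity) hα
  have hΓ : Gamma α ≠ 0 := (Gamma_pos_of_pos hα0).ne'
  have hc : 0 < 1 + a ^ 2 := by positivity
  have euler : ∀ {s r : ℝ}, 0 < s → 0 < r →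
      ∫ t in Set.Ioi (0 : ℝ), t ^ (s - 1) * exp (-(r * t)) = r ^ (-s) * Gamma s := by
    intro s r hs hr
    rw [integral_rpow_mul_exp_neg_mul_Ioi hs hr, one_div, inv_rpow hr.le, rpow_neg hr.le]
  have hswap := integral_integral_swap (integrable_schwinger m hα hc)
  have hleft : ∀ y : EuclideanSpace ℝ (Fin m),
      ∫ t in Set.Ioi (0 : ℝ), schwinger m α (1 + a ^ 2) y t =
        (1 + a ^ 2 + ‖y‖ ^ 2) ^ (-α) * Gamma α :=
    fun y => euler hα0 (by positivity)
  have hright : ∫ t in Set.Ioi (0 : ℝ), ∫ y, schwinger m α (1 + a ^ 2) y t =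
      π ^ ((m : ℝ) / 2) *
        ((1 + a ^ 2) ^ (-(α - (m : ℝ) / 2)) * Gamma (α - (m : ℝ) / 2)) := by
    rw [setIntegral_congr_fun measurableSet_Ioi
      (fun t ht => integral_schwinger_space m α (1 + a ^ 2) ht), integral_const_mul,
      euler (sub_pos.2 hα) hc]
  simp_rw [hleft] at hswap
  rw [hright, integral_mul_const] at hswap
  rw [eq_div_of_mul_eq hΓ hswap]
  ring
end

section
/- Fix 1 < q < 2 with conjugate exponent p (1/p + 1/q = 1), integers 1 ≤ m < n, and a real number t ≥ m/p. Then the constant C_{q,s,t,m} = (π^{(n−m)/(2q) − n/(2p)} / 2^{m/2}) · (q^{(2n−m)/(2q)} / p^{(2n−m)/(2p)}) · [Γ((sq−m)/2)/Γ(sq/2)]^{1/q} · [Γ((s−t)p/(2(p−2)) − n/2)/Γ((s−t)p/(2(p−2)) − m/2)]^{1/q − 1/p} tends to 0 as s → ∞. -/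
/-! Both Gamma quotients have the form `Γ(x) / Γ(x + a)` with `a > 0` fixed and `x → ∞`. By
log-convexity of `Γ`, the slope of `log Γ` on `[x, x + a]` is at least its slope on `[x - 1, x]`,
which is `log (x - 1)`; hence `Γ(x) / Γ(x + a) ≤ exp (-a log (x - 1)) → 0`. Since `1 < q < 2` forces
`p > 2`, the exponents `1/q` and `1/q - 1/p` are positive and the arguments of `Γ` do tend to
`+∞`, so both factors tend to `0` while the remaining ones do not depend on `s`. -/

open Filter

noncomputable section

/-- The constant `C_{q,s,t,m}` of the paper's trace inequality, with `n = k + m`: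
`C = (π^{(n−m)/(2q) − n/(2p)} / 2^{m/2}) · (q^{(2n−m)/(2q)} / p^{(2n−m)/(2p)})
  · [Γ((sq−m)/2)/Γ(sq/2)]^{1/q}
  · [Γ((s−t)p/(2(p−2)) − n/2)/Γ((s−t)p/(2(p−2)) − m/2)]^{1/q − 1/p}`. -/
noncomputable def traceConst (k m : ℕ) (p q s t : ℝ) : ℝ :=
  Real.pi ^ ((k : ℝ) / (2 * q) - ((k : ℝ) + (m : ℝ)) / (2 * p)) / 2 ^ ((m : ℝ) / 2) *
    (q ^ ((2 * ((k : ℝ) + (m : ℝ)) - (m : ℝ)) / (2 * q)) /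
      p ^ ((2 * ((k : ℝ) + (m : ℝ)) - (m : ℝ)) / (2 * p))) *
    (Real.Gamma ((s * q - (m : ℝ)) / 2) / Real.Gamma (s * q / 2)) ^ (1 / q) *
    (Real.Gamma ((s - t) * p / (2 * (p - 2)) - ((k : ℝ) + (m : ℝ)) / 2) /
        Real.Gamma ((s - t) * p / (2 * (p - 2)) - (m : ℝ) / 2)) ^ (1 / q - 1 / p)

/-- Log-convexity, with the functional equation at `x - 1`, controls the growth of `Γ` over a step
of length `a`. -/
lemma Gamma_div_Gamma_add_le {a x : ℝ} (ha : 0 < a) (hx : 1 < x) :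
    Real.Gamma x / Real.Gamma (x + a) ≤ Real.exp (-(a * Real.log (x - 1))) := by
  have hx1 : 0 < x - 1 := by linarith
  have h := Real.convexOn_log_Gamma.slope_mono_adjacent (x := x - 1) (y := x) (z := x + a)
    hx1 (Set.mem_Ioi.2 (by linarith)) (by linarith) (by linarith)
  have hG1 := Real.Gamma_pos_of_pos hx1
  have hG2 : 0 < Real.Gamma x := Real.Gamma_pos_of_pos (by linarith)
  have hG3 : 0 < Real.Gamma (x + a) := Real.Gamma_pos_of_pos (by linarith)
  have hrec : Real.log (Real.Gamma x) = Real.log (x - 1) + Real.log (Real.Gamma (x - 1)) := by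
    rw [← Real.log_mul hx1.ne' hG1.ne', ← Real.Gamma_add_one hx1.ne', sub_add_cancel]
  simp only [Function.comp_apply, sub_sub_cancel, div_one, add_sub_cancel_left] at h
  rw [le_div_iff₀ ha] at h
  rw [← Real.log_le_iff_le_exp (div_pos hG2 hG3), Real.log_div hG2.ne' hG3.ne']
  rw [hrec] at h ⊢
  linarith

lemma tendsto_Gamma_div_Gamma_add {a : ℝ} (ha : 0 < a) :
    Tendsto (fun x : ℝ => Real.Gamma x / Real.Gamma (x + a)) atTop (nhds 0) := by
  have hexp : Tendsto (fun x : ℝ => Real.exp (-(a * Real.log (x - 1)))) atTop (nhds 0) :=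
    Real.tendsto_exp_neg_atTop_nhds_zero.comp
      ((Real.tendsto_log_atTop.comp (tendsto_atTop_add_const_right _ (-1) tendsto_id)).const_mul_atTop
        ha)
  refine squeeze_zero' ?_ ?_ hexp
  · filter_upwards [eventually_gt_atTop 0] with x hx
    exact (div_pos (Real.Gamma_pos_of_pos hx) (Real.Gamma_pos_of_pos (by linarith))).le
  · filter_upwards [eventually_gt_atTop 1] with x hx
    exact Gamma_div_Gamma_add_le ha hx

/-- For fixed `1 < q < 2` with conjugate exponent `p`,
`1 ≤ m < n` (here `n = k + m`) and a fixed real `t ≥ m/p`, the constant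
`C_{q,s,t,m}` tends to `0` as `s → ∞`. -/
theorem traceConst_tendsto_zero (k m : ℕ) (hk : 1 ≤ k) (hm : 1 ≤ m)
    (p q t : ℝ) (hq1 : 1 < q) (hq2 : q < 2) (hpq : 1 / p + 1 / q = 1)
    (ht : t ≥ (m : ℝ) / p) :
    Tendsto (fun s => traceConst k m p q s t) atTop (nhds 0) := by
  have hq0 : 0 < q := by linarith
  have hqinv : 0 < 1 / q := by positivity
  have hq_half : 1 / 2 < 1 / q := one_div_lt_one_div_of_lt hq0 hq2
  have hq_one : 1 / q < 1 := by rw [div_lt_one hq0]; exact hq1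
  have hp0 : 0 < p := one_div_pos.1 (by linarith)
  have hp2 : 2 < p := lt_of_one_div_lt_one_div hp0 (by linarith)
  have hexp : 0 < 1 / q - 1 / p := by linarith
  have hk' : (0 : ℝ) < (k : ℝ) / 2 := by positivity
  have hm' : (0 : ℝ) < (m : ℝ) / 2 := by positivity
  have harg1 : Tendsto (fun s : ℝ => (s * q - (m : ℝ)) / 2) atTop atTop :=
    (tendsto_atTop_add_const_right _ (-(m : ℝ)) (tendsto_id.atTop_mul_const hq0)).atTop_div_const
      two_pos
  have harg2 : Tendsto
      (fun s : ℝ => (s - t) * p / (2 * (p - 2)) - ((k : ℝ) + (m : ℝ)) / 2) atTop atTop :=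
    tendsto_atTop_add_const_right _ (-(((k : ℝ) + (m : ℝ)) / 2))
      (((tendsto_atTop_add_const_right _ (-t) tendsto_id).atTop_mul_const hp0).atTop_div_const
        (by linarith))
  have h1 : Tendsto (fun s : ℝ =>
      (Real.Gamma ((s * q - (m : ℝ)) / 2) / Real.Gamma (s * q / 2)) ^ (1 / q)) atTop (nhds 0) := by
    have h := ((tendsto_Gamma_div_Gamma_add hm').comp harg1).rpow_const (p := 1 / q)
      (Or.inr hqinv.le)
    rw [Real.zero_rpow hqinv.ne'] at h
    refine h.congr fun s => ?_
    simp only [Function.comp_apply]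
    rw [show (s * q - (m : ℝ)) / 2 + (m : ℝ) / 2 = s * q / 2 by ring]
  have h2 : Tendsto (fun s : ℝ =>
      (Real.Gamma ((s - t) * p / (2 * (p - 2)) - ((k : ℝ) + (m : ℝ)) / 2) /
        Real.Gamma ((s - t) * p / (2 * (p - 2)) - (m : ℝ) / 2)) ^ (1 / q - 1 / p))
      atTop (nhds 0) := by
    have h := ((tendsto_Gamma_div_Gamma_add hk').comp harg2).rpow_const (p := 1 / q - 1 / p)
      (Or.inr hexp.le)
    rw [Real.zero_rpow hexp.ne'] at h
    refine h.congr fun s => ?_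
    simp only [Function.comp_apply]
    rw [show (s - t) * p / (2 * (p - 2)) - ((k : ℝ) + (m : ℝ)) / 2 + (k : ℝ) / 2
      = (s - t) * p / (2 * (p - 2)) - (m : ℝ) / 2 by ring]
  have h := (h1.const_mul
    (Real.pi ^ ((k : ℝ) / (2 * q) - ((k : ℝ) + (m : ℝ)) / (2 * p)) / 2 ^ ((m : ℝ) / 2) *
      (q ^ ((2 * ((k : ℝ) + (m : ℝ)) - (m : ℝ)) / (2 * q)) /
        p ^ ((2 * ((k : ℝ) + (m : ℝ)) - (m : ℝ)) / (2 * p))))).mul h2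
  rw [mul_zero] at h
  exact h

end
end
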